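/- Let n ≥ 3 and X = {x ∈ ℝⁿ : ‖x‖ = 1, ⟨x,e₁⟩ ≥ 0} ∪ {−e₁}. Let A be any deterministic learning algorithm (a hard-margin SVM) that, on every input multiset S containing examples of both labels that is linearly separable, outputs a linear classifier x ↦ 1[⟨ŵ,x⟩ + b̂ ≥ 0] consistent with S that maximizes, among all linear classifiers consistent with S, the minimum Euclidean distance from the instances of S to the decision hyperplane. Then for every ε ∈ (0, 1/16) there exist a linear target h* = (x ↦ 1[⟨w*,x⟩ + b* ≥ 0]) and a distribution D over D_{h*} with margin γ = 1/8 such that E_{S_trn~D^m}[ atk_D(1, h*, S_trn, A) ] > ε whenever m < max( e^{n/128}/(768ε), 1/(8ε) ). -/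

import Mathlib

open MeasureTheory ENNReal RealInnerProductSpace

/-- The multiset of training examples determined by a tuple of i.i.d. draws. -/
def toTrain {α : Type*} {m : ℕ} (f : Fin m → α) : Multiset α := ↑(List.ofFn f)

/-- The distribution of `m` i.i.d. draws from `D`. -/
noncomputable def samples {α : Type*} [MeasurableSpace α] (D : Measure α) (m : ℕ) :
    Measure (Fin m → α) := Measure.pi fun _ => D

/-- The `t`-point clean-label attackable rate of a deterministic learner. -/
noncomputable def atkDetT {X : Type*} [MeasurableSpace X] (t : ℕ) (D : Measure (X × Bool))
    (h : X → Bool) (S : Multiset (X × Bool)) (A : Multiset (X × Bool) → X → Bool) : ℝ≥0∞ :=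
  ⨆ Adv : {f : X → Multiset (X × Bool) //
      ∀ x : X, (∀ p ∈ f x, p.2 = h p.1) ∧ (f x).card ≤ t},
    D {p : X × Bool | A (S + Adv.1 p.1) p.1 ≠ h p.1}

/-- The (topological) support of a measure. -/
def msupport {α : Type*} [TopologicalSpace α] [MeasurableSpace α] (D : Measure α) : Set α :=
  {p | ∀ U : Set α, IsOpen U → p ∈ U → 0 < D U}

/-- The first standard basis vector of `ℝⁿ`. -/
noncomputable def e₁ (n : ℕ) (hn : 3 ≤ n) : EuclideanSpace ℝ (Fin n) :=
  EuclideanSpace.single ⟨0, by omega⟩ 1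

/-- The instance space `{x : ‖x‖ = 1, ⟨x,e₁⟩ ≥ 0} ∪ {-e₁}`. -/
abbrev HalfSphere (n : ℕ) (hn : 3 ≤ n) : Type :=
  {x : EuclideanSpace ℝ (Fin n) // (‖x‖ = 1 ∧ 0 ≤ ⟪x, e₁ n hn⟫) ∨ x = -(e₁ n hn)}

/-!
The learner is defeated on points that it has not seen. The equator `x ⟂ e₁` carries exponentially
many unit vectors with pairwise inner products at most `1 / 2`: the sign vectors of a binary code of
relative distance `1 / 4`, which exists by the Gilbert–Varshamov bound. The distribution puts mass
`8ε` uniformly on these `N` points, the rest on the isolated pole `-e₁`, and uses a single label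
`y`. To attack an unseen equatorial point `x`, insert the point `t` obtained by tilting `x` slightly
towards `e₁`, with label `!y`. All sample points have inner product at most `20 / 41` with `t`, so
some hyperplane separates `t` from the sample with margin `(1 - 20 / 41) / 2 > ‖x - t‖`; the
maximal margin is at least as large, hence the learner gives `x` the label of `t`. As long as
`m < N / (8ε)`, each code point is unseen with probability greater than `1 / 8`, and the attackable
rate exceeds `ε` in expectation. The label `y` is chosen so that the learner errs at the pole on
the empty sample, which settles `m = 0`.
-/

open Function ProbabilityTheory

/-- The sign in `{1, -1} ⊆ ℝ` of a Boolean label, with `true ↦ 1`. -/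
noncomputable def labelSign (y : Bool) : ℝ := if y then 1 else -1

lemma labelSign_mul_labelSign (y z : Bool) :
    labelSign y * labelSign z = if y ≠ z then -1 else 1 := by
  cases y <;> cases z <;> simp [labelSign]

lemma abs_labelSign (y : Bool) : |labelSign y| = 1 := by
  cases y <;> simp [labelSign]

section Hamming

variable {ι α : Type*} [Fintype ι] [DecidableEq ι] [Fintype α] [DecidableEq α]

lemma sum_pow_hammingDist {R : Type*} [CommRing R] (s : R) (v : ι → α) :
    ∑ u : ι → α, s ^ hammingDist u v = (1 + (Fintype.card α - 1) * s) ^ Fintype.card ι := by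
  have hpow (u : ι → α) : s ^ hammingDist u v = ∏ i, if u i ≠ v i then s else 1 := by
    simp [hammingDist, Finset.prod_ite]
  have hcoord (i : ι) : ∑ a, (if a ≠ v i then s else 1) = 1 + (Fintype.card α - 1) * s := by
    have hsplit (a : α) : (if a ≠ v i then s else 1) = s + if a = v i then 1 - s else 0 := by
      split_ifs <;> simp_all
    simp only [hsplit, Finset.sum_add_distrib, Finset.sum_const, Finset.card_univ, nsmul_eq_mul,
      Finset.sum_ite_eq', Finset.mem_univ, if_true]
    ring
  simp only [hpow, ← Fintype.prod_sum fun i a => if a ≠ v i then s else 1, hcoord,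
    Finset.prod_const, Finset.card_univ]

/-- Chernoff's method: every `u` in the ball has `t ^ card ι ≤ t ^ (q * hammingDist u v)`. -/
lemma card_hammingBall_mul_pow_le {t : ℝ} (ht₀ : 0 ≤ t) (ht₁ : t ≤ 1) (q : ℕ) (v : ι → α) :
    (Finset.card {u : ι → α | q * hammingDist u v ≤ Fintype.card ι} : ℝ) * t ^ Fintype.card ι ≤
      (1 + (Fintype.card α - 1) * t ^ q) ^ Fintype.card ι := by
  rw [← sum_pow_hammingDist (t ^ q) v, ← nsmul_eq_mul]
  refine (Finset.card_nsmul_le_sum _ (fun u => (t ^ q) ^ hammingDist u v) _ fun u hu => ?_).trans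
    (Finset.sum_le_univ_sum_of_nonneg fun u => by positivity)
  rw [← pow_mul]
  exact pow_le_pow_of_le_one ht₀ ht₁ (Finset.mem_filter.1 hu).2

end Hamming

lemma exists_isSeparated_card_le_mul {α : Type*} [Fintype α] (U : SetRel α α) [U.IsRefl]
    [U.IsSymm] {V : ℝ} (hV : ∀ a, ({b | (b, a) ∈ U}.ncard : ℝ) ≤ V) :
    ∃ C : Finset α, U.IsSeparated (C : Set α) ∧ (Fintype.card α : ℝ) ≤ C.card * V := by
  classical
  obtain ⟨N, hN⟩ := (Set.toFinite {N : Set α | N ⊆ Set.univ ∧ U.IsSeparated N}).exists_maximal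
    ⟨∅, Set.empty_subset _, SetRel.IsSeparated.empty⟩
  have hcover : U.IsCover Set.univ N := .of_maximal_isSeparated hN
  refine ⟨N.toFinite.toFinset, by simpa using hN.prop.2, ?_⟩
  have huniv : (Finset.univ : Finset α) ⊆
      N.toFinite.toFinset.biUnion fun a => {b | (b, a) ∈ U}.toFinite.toFinset := fun b _ => by
    simpa using hcover (Set.mem_univ b)
  calc (Fintype.card α : ℝ)
      ≤ ∑ a ∈ N.toFinite.toFinset, ({b | (b, a) ∈ U}.ncard : ℝ) := by
        simp only [fun a => Set.ncard_eq_toFinset_card {b | (b, a) ∈ U} (Set.toFinite _)]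
        exact_mod_cast (Finset.card_le_card huniv).trans Finset.card_biUnion_le
    _ ≤ N.toFinite.toFinset.card * V := by
        rw [← nsmul_eq_mul]
        exact Finset.sum_le_card_nsmul _ _ _ fun a _ => hV a

lemma exists_binaryCode (ι : Type*) [Fintype ι] : ∃ C : Finset (ι → Bool),
    (C : Set (ι → Bool)).Pairwise (fun u v => Fintype.card ι < 4 * hammingDist u v) ∧
      (108 / 97 : ℝ) ^ Fintype.card ι ≤ C.card := by
  classical
  -- Gilbert–Varshamov: at `t = 2 / 3` the ball of radius `card ι / 4` has at most
  -- `((1 + t ^ 4) / t) ^ card ι = (97 / 54) ^ card ι` words, and `2 / (97 / 54) = 108 / 97`.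
  let U : SetRel (ι → Bool) (ι → Bool) := {p | 4 * hammingDist p.1 p.2 ≤ Fintype.card ι}
  have : U.IsRefl := ⟨fun u => by simp [U]⟩
  have : U.IsSymm := ⟨fun u v h => by simpa [U, hammingDist_comm] using h⟩
  have hball (v : ι → Bool) : ({u | (u, v) ∈ U}.ncard : ℝ) ≤ (97 / 54) ^ Fintype.card ι := by
    have h := card_hammingBall_mul_pow_le (t := 2 / 3) (by norm_num) (by norm_num) 4 v
    rw [← le_div_iff₀ (by positivity), ← div_pow, Fintype.card_bool] at h
    norm_num at h
    simpa [U, Set.ncard_eq_toFinset_card'] using h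
  obtain ⟨C, hsep, hcard⟩ := exists_isSeparated_card_le_mul U hball
  refine ⟨C, fun u hu v hv huv => not_le.1 (hsep hu hv huv), ?_⟩
  rw [Fintype.card_fun, Fintype.card_bool, Nat.cast_pow, ← div_le_iff₀ (by positivity), ← div_pow]
    at hcard
  norm_num at hcard
  simpa only [div_pow] using hcard

section SphericalCode

variable {F : Type*} [NormedAddCommGroup F] [InnerProductSpace ℝ F]

/-- The unit vector `(±b₁ ± ⋯ ± b_d) / √d` attached to a sign pattern `v` and an orthonormal
family `b`; it embeds the Hamming cube into the unit sphere. -/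
noncomputable def signVector {ι : Type*} [Fintype ι] (b : ι → F) (v : ι → Bool) : F :=
  ∑ i, (labelSign (v i) / √(Fintype.card ι)) • b i

variable {ι : Type*} [Fintype ι] [Nonempty ι] {b : ι → F}

lemma inner_signVector (hb : Orthonormal ℝ b) (u v : ι → Bool) :
    ⟪signVector b u, signVector b v⟫ = 1 - 2 * hammingDist u v / Fintype.card ι := by
  have hcoord (i : ι) : labelSign (u i) / √(Fintype.card ι) * (labelSign (v i) / √(Fintype.card ι))
      = (1 - 2 * if u i ≠ v i then 1 else 0) / Fintype.card ι := by
    rw [div_mul_div_comm, Real.mul_self_sqrt (Nat.cast_nonneg _), labelSign_mul_labelSign]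
    split_ifs <;> norm_num
  simp only [signVector, hb.inner_sum, conj_trivial, hcoord]
  rw [← Finset.sum_div, Finset.sum_sub_distrib, ← Finset.mul_sum, Finset.sum_boole,
    Finset.sum_const, Finset.card_univ, nsmul_eq_mul, mul_one, sub_div, div_self (by simp)]
  rfl

lemma norm_signVector (hb : Orthonormal ℝ b) (v : ι → Bool) : ‖signVector b v‖ = 1 := by
  rw [← sq_eq_sq₀ (norm_nonneg _) zero_le_one, ← real_inner_self_eq_norm_sq, inner_signVector hb]
  simp

lemma inner_signVector_le_half (hb : Orthonormal ℝ b) {u v : ι → Bool}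
    (huv : Fintype.card ι ≤ 4 * hammingDist u v) :
    ⟪signVector b u, signVector b v⟫ ≤ 1 / 2 := by
  have huv' : (Fintype.card ι : ℝ) ≤ 4 * hammingDist u v := by exact_mod_cast huv
  have hfrac : 1 / 2 ≤ 2 * (hammingDist u v : ℝ) / Fintype.card ι := by
    rw [le_div_iff₀ (by simp [Fintype.card_pos])]
    linarith
  rw [inner_signVector hb]
  linarith

lemma exists_sphericalCode_of_orthonormal (hb : Orthonormal ℝ b) : ∃ C : Finset F,
    (∀ x ∈ C, ‖x‖ = 1) ∧ (C : Set F).Pairwise (fun x y => ⟪x, y⟫ ≤ 1 / 2) ∧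
      (108 / 97 : ℝ) ^ Fintype.card ι ≤ C.card := by
  classical
  obtain ⟨C, hsep, hcard⟩ := exists_binaryCode ι
  have hpair : (C : Set (ι → Bool)).Pairwise
      ((fun x y : F => ⟪x, y⟫ ≤ 1 / 2) on signVector b) :=
    hsep.imp fun _ _ h => inner_signVector_le_half hb h.le
  have hinj : Set.InjOn (signVector b) C := fun u hu v hv huv => by
    by_contra hne
    have hle : ⟪signVector b u, signVector b v⟫ ≤ 1 / 2 := hpair hu hv hne
    rw [huv, real_inner_self_eq_norm_sq, norm_signVector hb] at hle
    norm_num at hle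
  refine ⟨C.image (signVector b), by simpa using fun v _ => norm_signVector hb v, ?_, ?_⟩
  · rwa [Finset.coe_image, hinj.pairwise_image]
  · rwa [Finset.card_image_of_injOn hinj]

lemma exists_sphericalCode (F : Type*) [NormedAddCommGroup F] [InnerProductSpace ℝ F]
    [FiniteDimensional ℝ F] [Nontrivial F] : ∃ C : Finset F, (∀ x ∈ C, ‖x‖ = 1) ∧
      (C : Set F).Pairwise (fun x y => ⟪x, y⟫ ≤ 1 / 2) ∧
        (108 / 97 : ℝ) ^ Module.finrank ℝ F ≤ C.card := by
  have : NeZero (Module.finrank ℝ F) := ⟨Module.finrank_pos.ne'⟩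
  simpa only [Fintype.card_fin] using
    exists_sphericalCode_of_orthonormal (stdOrthonormalBasis ℝ F).orthonormal

end SphericalCode

section Classifier

variable {X E : Type*} [NormedAddCommGroup E] [InnerProductSpace ℝ E] {φ : X → E}

/-- The linear classifier `x ↦ 1[⟨w, φ x⟩ + b ≥ 0]` on instances embedded in `E` by `φ`. -/
noncomputable def linearClassifier (φ : X → E) (w : E) (b : ℝ) (x : X) : Bool :=
  decide (0 ≤ ⟪w, φ x⟫ + b)

/-- The least distance from the instances of `S` to the hyperplane `⟨w, ·⟩ + b = 0`; it is `0` for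
empty `S` and for `w = 0`. -/
noncomputable def geometricMargin (φ : X → E) (w : E) (b : ℝ) (S : Multiset (X × Bool)) : ℝ :=
  ⨅ p : {p // p ∈ S}, |⟪w, φ p.1.1⟫ + b| / ‖w‖

/-- The learners that return a consistent linear classifier of maximal geometric margin on every
linearly separable sample with both labels. Their output on all other samples is arbitrary. -/
def IsHardMarginSVM (φ : X → E) (A : Multiset (X × Bool) → X → Bool) : Prop :=
  ∀ S : Multiset (X × Bool), (∃ p ∈ S, p.2 = true) → (∃ p ∈ S, p.2 = false) →
    (∃ (w : E) (b : ℝ), w ≠ 0 ∧ ∀ p ∈ S, p.2 = linearClassifier φ w b p.1) →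
    ∃ (w : E) (b : ℝ), w ≠ 0 ∧ A S = linearClassifier φ w b ∧
      (∀ p ∈ S, p.2 = linearClassifier φ w b p.1) ∧
      ∀ (w' : E) (b' : ℝ), w' ≠ 0 → (∀ p ∈ S, p.2 = linearClassifier φ w' b' p.1) →
        geometricMargin φ w' b' S ≤ geometricMargin φ w b S

lemma geometricMargin_le {w : E} {b : ℝ} {S : Multiset (X × Bool)} {p : X × Bool} (hp : p ∈ S) :
    geometricMargin φ w b S ≤ |⟪w, φ p.1⟫ + b| / ‖w‖ :=
  ciInf_le (f := fun p : {p // p ∈ S} => |⟪w, φ p.1.1⟫ + b| / ‖w‖)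
    ⟨0, by rintro _ ⟨p, rfl⟩; positivity⟩ ⟨p, hp⟩

lemma le_geometricMargin {w : E} {b r : ℝ} {S : Multiset (X × Bool)} (hS : ∃ p, p ∈ S)
    (hr : ∀ p ∈ S, r ≤ |⟪w, φ p.1⟫ + b| / ‖w‖) : r ≤ geometricMargin φ w b S :=
  have : Nonempty {p // p ∈ S} := nonempty_subtype.2 hS
  le_ciInf fun p => hr p.1 p.2

lemma linearClassifier_eq_of_dist_lt {w : E} {b : ℝ} {x z : X}
    (hxz : dist (φ x) (φ z) < |⟪w, φ z⟫ + b| / ‖w‖) :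
    linearClassifier φ w b x = linearClassifier φ w b z := by
  have hw : 0 < ‖w‖ := (norm_nonneg w).lt_of_ne' fun h => by
    rw [h, _root_.div_zero] at hxz
    exact hxz.not_ge dist_nonneg
  have hlip : |⟪w, φ x⟫ - ⟪w, φ z⟫| ≤ ‖w‖ * dist (φ x) (φ z) := by
    rw [← inner_sub_right, dist_eq_norm]
    exact abs_real_inner_le_norm _ _
  have hlt : |⟪w, φ x⟫ - ⟪w, φ z⟫| < |⟪w, φ z⟫ + b| := by
    rw [lt_div_iff₀' hw] at hxz
    exact hlip.trans_lt hxz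
  simp only [linearClassifier, decide_eq_decide]
  rcases abs_lt.1 hlt with ⟨hl, hr⟩
  rcases le_or_gt 0 (⟪w, φ z⟫ + b) with h | h
  · rw [abs_of_nonneg h] at hl
    exact iff_of_true (by linarith) h
  · rw [abs_of_neg h] at hr
    exact iff_of_false (by linarith) h.not_ge

lemma IsHardMarginSVM.apply_eq_of_dist_lt {A : Multiset (X × Bool) → X → Bool}
    (hA : IsHardMarginSVM φ A) {S : Multiset (X × Bool)} (htrue : ∃ p ∈ S, p.2 = true)
    (hfalse : ∃ p ∈ S, p.2 = false) {w : E} {b r : ℝ} (hw : w ≠ 0)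
    (hS : ∀ p ∈ S, p.2 = linearClassifier φ w b p.1)
    (hr : ∀ p ∈ S, r ≤ |⟪w, φ p.1⟫ + b| / ‖w‖) {p : X × Bool} (hp : p ∈ S) {x : X}
    (hx : dist (φ x) (φ p.1) < r) : A S x = p.2 := by
  obtain ⟨w₀, b₀, -, hAS, hcons, hmax⟩ := hA S htrue hfalse ⟨w, b, hw, hS⟩
  have hmargin : r ≤ |⟪w₀, φ p.1⟫ + b₀| / ‖w₀‖ :=
    (le_geometricMargin ⟨p, hp⟩ hr).trans <|
      (hmax w b hw hS).trans (geometricMargin_le hp)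
  rw [hAS, hcons p hp]
  exact linearClassifier_eq_of_dist_lt (hx.trans_le hmargin)

lemma inner_neg_labelSign_smul_add (y : Bool) (v z : E) (c : ℝ) :
    ⟪-labelSign y • v, z⟫ + labelSign y * c = labelSign y * (c - ⟪v, z⟫) := by
  rw [inner_smul_left, conj_trivial]
  ring

lemma norm_neg_labelSign_smul (y : Bool) (v : E) : ‖-labelSign y • v‖ = ‖v‖ := by
  rw [norm_smul, norm_neg, Real.norm_eq_abs, abs_labelSign, one_mul]

lemma linearClassifier_of_inner_lt {v : E} {c : ℝ} {x : X} (h : ⟪v, φ x⟫ < c) (y : Bool) :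
    linearClassifier φ (-labelSign y • v) (labelSign y * c) x = y := by
  rw [linearClassifier, inner_neg_labelSign_smul_add]
  cases y <;> simpa [labelSign] using by linarith

lemma linearClassifier_of_lt_inner {v : E} {c : ℝ} {x : X} (h : c < ⟪v, φ x⟫) (y : Bool) :
    linearClassifier φ (-labelSign y • v) (labelSign y * c) x = !y := by
  rw [linearClassifier, inner_neg_labelSign_smul_add]
  cases y <;> simpa [labelSign] using by linarith

/-- The hyperplane orthogonal to `φ x'` halfway between the levels `c` and `1` separates `x'` from
`S` with margin `(1 - c) / 2`. -/
lemma IsHardMarginSVM.apply_add_singleton {A : Multiset (X × Bool) → X → Bool}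
    (hA : IsHardMarginSVM φ A) {S : Multiset (X × Bool)} (hS : S ≠ 0) {y : Bool} {x x' : X} {c : ℝ}
    (hx' : ‖φ x'‖ = 1) (hSy : ∀ p ∈ S, p.2 = y ∧ ⟪φ x', φ p.1⟫ ≤ c)
    (hx : dist (φ x) (φ x') < (1 - c) / 2) : A (S + {(x', !y)}) x = !y := by
  have hc : c < 1 := by linarith [dist_nonneg (x := φ x) (y := φ x')]
  have hself : ⟪φ x', φ x'⟫ = 1 := by rw [real_inner_self_eq_norm_sq, hx', one_pow]
  obtain ⟨q, hq⟩ := Multiset.exists_mem_of_ne_zero hS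
  have hlabels (l : Bool) : ∃ p ∈ S + {(x', !y)}, p.2 = l := by
    obtain rfl | rfl : l = y ∨ l = !y := by cases l <;> cases y <;> simp
    · exact ⟨q, Multiset.mem_add.2 (.inl hq), (hSy q hq).1⟩
    · exact ⟨(x', !y), by simp, rfl⟩
  refine hA.apply_eq_of_dist_lt (hlabels true) (hlabels false) (w := -labelSign y • φ x')
    (b := labelSign y * ((1 + c) / 2)) ?_ ?_ ?_ (p := (x', !y)) (by simp) hx
  · rw [← norm_ne_zero_iff, norm_neg_labelSign_smul, hx']
    exact one_ne_zero
  · intro p hp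
    rcases Multiset.mem_add.1 hp with hp | hp
    · obtain ⟨hpy, hpc⟩ := hSy p hp
      rw [linearClassifier_of_inner_lt (by linarith), hpy]
    · obtain rfl := Multiset.mem_singleton.1 hp
      rw [linearClassifier_of_lt_inner (by dsimp only; linarith)]
  · intro p hp
    rw [norm_neg_labelSign_smul, hx', div_one, inner_neg_labelSign_smul_add, abs_mul, abs_labelSign,
      one_mul, le_abs]
    rcases Multiset.mem_add.1 hp with hp | hp
    · left
      linarith [(hSy p hp).2]
    · right
      obtain rfl := Multiset.mem_singleton.1 hp
      linarith

end Classifier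

section Probability

lemma mem_toTrain {α : Type*} {m : ℕ} {f : Fin m → α} {a : α} : a ∈ toTrain f ↔ ∃ k, f k = a := by
  simp [toTrain, List.mem_ofFn]

lemma samples_univ_pi {α : Type*} [MeasurableSpace α] (D : Measure α) [SigmaFinite D] (s : Set α)
    (m : ℕ) : samples D m (Set.univ.pi fun _ => s) = D s ^ m := by
  simp [samples, Measure.pi_pi]

lemma ae_samples_of_ae {α : Type*} [MeasurableSpace α] {D : Measure α} [SigmaFinite D]
    {P : α → Prop} (h : ∀ᵐ a ∂D, P a) (m : ℕ) : ∀ᵐ f ∂samples D m, ∀ k, P (f k) :=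
  ae_all_iff.2 fun _ => Measure.tendsto_eval_ae_ae.eventually h

lemma msupport_subset_of_ae_mem {α : Type*} [TopologicalSpace α] [MeasurableSpace α]
    {D : Measure α} {T : Set α} (hT : IsClosed T) (h : ∀ᵐ a ∂D, a ∈ T) : msupport D ⊆ T :=
  fun p hp => by
    by_contra hpT
    exact (hp Tᶜ hT.isOpen_compl hpT).ne' h

section HeavyAtom

variable {α : Type*} [MeasurableSpace α] [MeasurableSingletonClass α] {a b : α} {s : Finset α}
  {δ : ℝ≥0∞}

/-- The distribution that spreads mass `δ` uniformly over the finite set `s` and puts the remaining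
mass on the atom `a`. The subtraction is truncated, so this has mass one only for `δ ≤ 1`. -/
noncomputable def heavyAtomMixture (a : α) (s : Finset α) (δ : ℝ≥0∞) : Measure α :=
  (1 - δ) • Measure.dirac a + δ • uniformOn (s : Set α)

lemma isProbabilityMeasure_heavyAtomMixture (hs : s.Nonempty) (hδ : δ ≤ 1) :
    IsProbabilityMeasure (heavyAtomMixture a s δ) := by
  have := isProbabilityMeasure_uniformOn s.finite_toSet hs
  exact ⟨by simp [heavyAtomMixture, tsub_add_cancel_of_le hδ]⟩

lemma le_heavyAtomMixture_singleton_self : 1 - δ ≤ heavyAtomMixture a s δ {a} := by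
  simp [heavyAtomMixture]

lemma heavyAtomMixture_singleton (hb : b ∈ s) (hab : a ≠ b) :
    heavyAtomMixture a s δ {b} = δ / s.card := by
  have hunif : uniformOn (s : Set α) {b} = (s.card : ℝ≥0∞)⁻¹ := by
    rw [uniformOn, cond_apply s.measurableSet, Measure.count_apply_finset,
      Set.inter_eq_right.2 (Set.singleton_subset_iff.2 hb), Measure.count_singleton, mul_one]
  simp [heavyAtomMixture, hunif, hab, div_eq_mul_inv]

lemma ae_mem_heavyAtomMixture : ∀ᵐ p ∂heavyAtomMixture a s δ, p ∈ insert a (s : Set α) := by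
  refine ae_add_measure_iff.2 ⟨Measure.ae_smul_measure ?_ _, Measure.ae_smul_measure ?_ _⟩
  · rw [ae_dirac_eq]
    exact Set.mem_insert _ _
  · exact (ae_cond_mem s.measurableSet).mono fun _ => Set.mem_insert_of_mem _

end HeavyAtom

section AttackableRate

variable {X : Type*} [MeasurableSpace X] [MeasurableSingletonClass X] {D : Measure (X × Bool)}
  {h : X → Bool} {A : Multiset (X × Bool) → X → Bool} {t : ℕ} {Adv : X → Multiset (X × Bool)}
  {C : Finset X}

lemma sum_measure_singleton_le_atkDetT {S : Multiset (X × Bool)}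
    (hAdv : ∀ x, (∀ p ∈ Adv x, p.2 = h p.1) ∧ (Adv x).card ≤ t)
    (hC : ∀ x ∈ C, A (S + Adv x) x ≠ h x) : ∑ x ∈ C, D {(x, h x)} ≤ atkDetT t D h S A := by
  let graph : X ↪ X × Bool := ⟨fun x => (x, h x), fun _ _ hxy => congrArg Prod.fst hxy⟩
  calc ∑ x ∈ C, D {(x, h x)} = D (C.map graph) := by
        rw [← sum_measure_singleton, Finset.sum_map]
        rfl
    _ ≤ D {p | A (S + Adv p.1) p.1 ≠ h p.1} := measure_mono fun p hp => by
        obtain ⟨x, hx, rfl⟩ := Finset.mem_map.1 (Finset.mem_coe.1 hp)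
        exact hC x hx
    _ ≤ atkDetT t D h S A := le_iSup_of_le ⟨Adv, hAdv⟩ le_rfl

lemma sum_mul_compl_pow_le_lintegral_atkDetT [SigmaFinite D] {m : ℕ}
    (hAdv : ∀ x, (∀ p ∈ Adv x, p.2 = h p.1) ∧ (Adv x).card ≤ t)
    (hC : ∀ᵐ f ∂samples D m, ∀ x ∈ C, (∀ k, f k ≠ (x, h x)) → A (toTrain f + Adv x) x ≠ h x) :
    ∑ x ∈ C, D {(x, h x)} * D {(x, h x)}ᶜ ^ m ≤
      ∫⁻ f, atkDetT t D h (toTrain f) A ∂samples D m := by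
  classical
  let avoiding (x : X) : Set (Fin m → X × Bool) := Set.univ.pi fun _ => {(x, h x)}ᶜ
  have hmeas (x : X) : MeasurableSet (avoiding x) :=
    .univ_pi fun _ => (measurableSet_singleton _).compl
  calc ∑ x ∈ C, D {(x, h x)} * D {(x, h x)}ᶜ ^ m
      = ∑ x ∈ C, ∫⁻ f, (avoiding x).indicator (fun _ => D {(x, h x)}) f ∂samples D m :=
        Finset.sum_congr rfl fun x _ => by
          rw [lintegral_indicator_const (hmeas x), samples_univ_pi]
    _ = ∫⁻ f, ∑ x ∈ C, (avoiding x).indicator (fun _ => D {(x, h x)}) f ∂samples D m :=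
        (lintegral_finsetSum _ fun x _ => measurable_const.indicator (hmeas x)).symm
    _ ≤ ∫⁻ f, atkDetT t D h (toTrain f) A ∂samples D m := by
        refine lintegral_mono_ae (hC.mono fun f hf => ?_)
        rw [Finset.sum_indicator_eq_sum_filter C (fun x _ => D {(x, h x)}) avoiding fun _ => f]
        refine sum_measure_singleton_le_atkDetT hAdv fun x hx => ?_
        obtain ⟨hxC, hxf⟩ := Finset.mem_filter.1 hx
        exact hf x hxC fun k => hxf k (Set.mem_univ k)

end AttackableRate

end Probability

lemma one_eighth_lt_one_sub_pow {u : ℝ} (hu : u ≤ 1 / 2) {m : ℕ} (hm : m * u < 1) :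
    1 / 8 < (1 - u) ^ m := by
  have hlog : 1 - (1 - u)⁻¹ ≤ Real.log (1 - u) := Real.one_sub_inv_le_log_of_pos (by linarith)
  have hlog2 : Real.log (1 / 8) ≤ -2 := by
    rw [show (1 / 8 : ℝ) = 2⁻¹ ^ 3 by norm_num, Real.log_pow, Real.log_inv]
    push_cast
    linarith [Real.log_two_gt_d9]
  have hexp : -2 < m * (1 - (1 - u)⁻¹) := by
    have : 1 - (1 - u)⁻¹ = -(u / (1 - u)) := by field_simp [show 1 - u ≠ 0 by linarith]; ring
    have : m * u / (1 - u) < 2 := by rw [div_lt_iff₀ (by linarith)]; linarith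
    rw [‹1 - (1 - u)⁻¹ = _›, mul_neg, ← mul_div_assoc]
    linarith
  rw [← Real.log_lt_log_iff (by norm_num) (pow_pos (by linarith) m), Real.log_pow]
  exact hlog2.trans_lt (hexp.trans_le (mul_le_mul_of_nonneg_left hlog (Nat.cast_nonneg m)))

lemma exp_div_le_pow (k : ℕ) : Real.exp ((k + 1) / 128) / 96 ≤ (108 / 97 : ℝ) ^ k := by
  have hexp : Real.exp (1 / 128) ≤ 108 / 97 := by
    rw [← Real.le_log_iff_exp_le (by norm_num)]
    exact le_trans (by norm_num) (Real.one_sub_inv_le_log_of_pos (by norm_num))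
  calc Real.exp ((k + 1) / 128) / 96 = Real.exp (1 / 128) ^ k * (Real.exp (1 / 128) / 96) := by
        rw [← mul_div_assoc, ← pow_succ, ← Real.exp_nat_mul]
        push_cast
        ring_nf
    _ ≤ (108 / 97) ^ k * 1 := by gcongr; linarith
    _ = (108 / 97) ^ k := mul_one _

namespace HalfSphere

variable {n : ℕ} {hn : 3 ≤ n}

lemma norm_e₁ : ‖e₁ n hn‖ = 1 := by
  simp [e₁]

lemma inner_e₁_self : ⟪e₁ n hn, e₁ n hn⟫ = 1 := by
  rw [real_inner_self_eq_norm_sq, norm_e₁, one_pow]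

lemma norm_coe (x : HalfSphere n hn) : ‖x.1‖ = 1 := by
  rcases x.2 with h | h
  · exact h.1
  · rw [h, norm_neg, norm_e₁]

/-- The south pole `-e₁`, the isolated point of the half-sphere. -/
noncomputable def pole : HalfSphere n hn := ⟨-(e₁ n hn), .inr rfl⟩

lemma inner_pole_e₁ : ⟪(pole : HalfSphere n hn).1, e₁ n hn⟫ = -1 := by
  rw [pole, inner_neg_left, inner_e₁_self]

/-- The unit vector obtained by moving a point `x` of the equator a little towards `e₁`; the
Pythagorean triple `9² + 40² = 41²` keeps it on the sphere. -/
noncomputable def tilt (x : HalfSphere n hn) (hx : ⟪x.1, e₁ n hn⟫ = 0) : HalfSphere n hn :=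
  ⟨(40 / 41 : ℝ) • x.1 + (9 / 41 : ℝ) • e₁ n hn, .inl ⟨by
    rw [← sq_eq_sq₀ (norm_nonneg _) zero_le_one, norm_add_sq_real, real_inner_smul_left,
      real_inner_smul_right, hx, norm_smul, norm_smul, norm_coe, norm_e₁]
    norm_num, by
    rw [inner_add_left, real_inner_smul_left, real_inner_smul_left, hx, inner_e₁_self]
    norm_num⟩⟩

variable {x y : HalfSphere n hn}

lemma inner_tilt (hx : ⟪x.1, e₁ n hn⟫ = 0) (v : EuclideanSpace ℝ (Fin n)) :
    ⟪(tilt x hx).1, v⟫ = 40 / 41 * ⟪x.1, v⟫ + 9 / 41 * ⟪e₁ n hn, v⟫ := by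
  simp only [tilt, inner_add_left, real_inner_smul_left]

lemma inner_tilt_e₁ (hx : ⟪x.1, e₁ n hn⟫ = 0) : ⟪(tilt x hx).1, e₁ n hn⟫ = 9 / 41 := by
  rw [inner_tilt, hx, inner_e₁_self]
  norm_num

lemma inner_tilt_pole (hx : ⟪x.1, e₁ n hn⟫ = 0) :
    ⟪(tilt x hx).1, (pole : HalfSphere n hn).1⟫ = -(9 / 41) := by
  rw [pole, inner_neg_right, inner_tilt_e₁]

lemma inner_tilt_of_equatorial (hx : ⟪x.1, e₁ n hn⟫ = 0) (hy : ⟪y.1, e₁ n hn⟫ = 0) :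
    ⟪(tilt x hx).1, y.1⟫ = 40 / 41 * ⟪x.1, y.1⟫ := by
  rw [inner_tilt, real_inner_comm y.1 (e₁ n hn), hy, mul_zero, add_zero]

lemma dist_tilt_lt (hx : ⟪x.1, e₁ n hn⟫ = 0) :
    dist x.1 (tilt x hx).1 < (1 - 20 / 41) / 2 := by
  have hsq : dist x.1 (tilt x hx).1 ^ 2 = 2 / 41 := by
    rw [dist_eq_norm, norm_sub_sq_real, real_inner_comm, inner_tilt_of_equatorial hx hx,
      real_inner_self_eq_norm_sq, norm_coe, norm_coe]
    norm_num
  refine lt_of_pow_lt_pow_left₀ 2 (by norm_num) ?_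
  rw [hsq]
  norm_num

lemma exists_equatorial_code (n : ℕ) (hn : 3 ≤ n) : ∃ C : Finset (HalfSphere n hn),
    (∀ x ∈ C, ⟪x.1, e₁ n hn⟫ = 0) ∧
      (C : Set (HalfSphere n hn)).Pairwise (fun x y => ⟪x.1, y.1⟫ ≤ 1 / 2) ∧
        1 ≤ (C.card : ℝ) ∧ Real.exp (n / 128) / 96 ≤ C.card := by
  have hne : e₁ n hn ≠ 0 := norm_ne_zero_iff.1 (by simp [norm_e₁])
  have : Fact (Module.finrank ℝ (EuclideanSpace ℝ (Fin n)) = n - 1 + 1) :=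
    ⟨by rw [finrank_euclideanSpace_fin]; omega⟩
  have hfinrank : Module.finrank ℝ (ℝ ∙ e₁ n hn)ᗮ = n - 1 :=
    Submodule.finrank_orthogonal_span_singleton hne
  have : Nontrivial (ℝ ∙ e₁ n hn)ᗮ := Module.nontrivial_of_finrank_pos (R := ℝ) (by omega)
  obtain ⟨C, hnorm, hpair, hcard⟩ := exists_sphericalCode (ℝ ∙ e₁ n hn)ᗮ
  have horth (v : (ℝ ∙ e₁ n hn)ᗮ) : ⟪v.1, e₁ n hn⟫ = 0 := by
    rw [real_inner_comm]
    exact Submodule.mem_orthogonal_singleton_iff_inner_right.1 v.2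
  let toHalfSphere : {v // v ∈ C} ↪ HalfSphere n hn :=
    ⟨fun v => ⟨v.1.1, .inl ⟨hnorm v.1 v.2, (horth v.1).ge⟩⟩,
      fun _ _ hvw => Subtype.ext (Subtype.ext (Subtype.mk.inj hvw))⟩
  rw [hfinrank] at hcard
  refine ⟨C.attach.map toHalfSphere, ?_, ?_, ?_, ?_⟩
  · rintro _ hx
    obtain ⟨v, -, rfl⟩ := Finset.mem_map.1 hx
    exact horth v.1
  · rintro _ hx _ hy hxy
    obtain ⟨v, -, rfl⟩ := Finset.mem_map.1 hx
    obtain ⟨w, -, rfl⟩ := Finset.mem_map.1 hy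
    exact hpair v.2 w.2 fun h => hxy (congrArg toHalfSphere (Subtype.ext h))
  · rw [Finset.card_map, Finset.card_attach]
    exact (one_le_pow₀ (by norm_num)).trans hcard
  · rw [Finset.card_map, Finset.card_attach]
    have hexp := exp_div_le_pow (n - 1)
    rw [← Nat.cast_add_one, Nat.sub_add_cancel (by omega)] at hexp
    exact hexp.trans hcard

/-- The target hypothesis with label `!y` on the cap `⟪x, e₁⟫ > 1 / 16` and `y` below it. -/
noncomputable def capTarget (y : Bool) : HalfSphere n hn → Bool :=
  linearClassifier Subtype.val (-labelSign y • e₁ n hn) (labelSign y * (1 / 16))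

lemma capTarget_of_inner_nonpos (hx : ⟪x.1, e₁ n hn⟫ ≤ 0) (y : Bool) : capTarget y x = y :=
  linearClassifier_of_inner_lt (by rw [real_inner_comm]; linarith) y

lemma capTarget_tilt (hx : ⟪x.1, e₁ n hn⟫ = 0) (y : Bool) : capTarget y (tilt x hx) = !y :=
  linearClassifier_of_lt_inner (by rw [real_inner_comm, inner_tilt_e₁]; norm_num) y

open Classical in
/-- The one-point clean-label attacker that answers a point of the equator by its tilt. -/
noncomputable def attacker (y : Bool) (x : HalfSphere n hn) : Multiset (HalfSphere n hn × Bool) :=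
  if hx : ⟪x.1, e₁ n hn⟫ = 0 then {(tilt x hx, !y)} else 0

lemma attacker_clean_and_card_le_one (y : Bool) (x : HalfSphere n hn) :
    (∀ p ∈ attacker y x, p.2 = capTarget y p.1) ∧ (attacker y x).card ≤ 1 := by
  rw [attacker]
  split_ifs with hx
  · simp [capTarget_tilt]
  · simp

variable {A : Multiset (HalfSphere n hn × Bool) → HalfSphere n hn → Bool}
  {C : Finset (HalfSphere n hn)}

lemma apply_add_attacker (hA : IsHardMarginSVM Subtype.val A)
    (heq : ∀ x ∈ C, ⟪x.1, e₁ n hn⟫ = 0)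
    (hpair : (C : Set (HalfSphere n hn)).Pairwise fun x y => ⟪x.1, y.1⟫ ≤ 1 / 2)
    {S : Multiset (HalfSphere n hn × Bool)} (hS : S ≠ 0) {y : Bool}
    (hSC : ∀ p ∈ S, p ∈ insert (pole, y) (↑(C ×ˢ {y}) : Set (HalfSphere n hn × Bool)))
    (hx : x ∈ C) (hxS : (x, y) ∉ S) : A (S + attacker y x) x = !y := by
  have hx₀ := heq x hx
  rw [attacker, dif_pos hx₀]
  refine hA.apply_add_singleton (c := 20 / 41) hS (norm_coe _) (fun p hp => ?_) (dist_tilt_lt hx₀)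
  rcases hSC p hp with rfl | hpC
  · rw [inner_tilt_pole]
    norm_num
  · obtain ⟨hpC, hpy⟩ : p.1 ∈ C ∧ p.2 = y := by
      rwa [Finset.mem_coe, Finset.mem_product, Finset.mem_singleton] at hpC
    have hne : x ≠ p.1 := fun h => hxS (by rwa [h, ← hpy])
    refine ⟨hpy, ?_⟩
    rw [inner_tilt_of_equatorial hx₀ (heq _ hpC)]
    linarith [hpair hx hpC hne]

/-- The sampling distribution of the lower bound: mass `8ε` is spread over the code `C`, and the
pole carries the rest. All labels are `y`. -/
noncomputable def hardDistribution (C : Finset (HalfSphere n hn)) (y : Bool) (ε : ℝ) :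
    Measure (HalfSphere n hn × Bool) :=
  heavyAtomMixture (pole, y) (C ×ˢ {y}) (.ofReal (8 * ε))

lemma isProbabilityMeasure_hardDistribution (hC : C.Nonempty) (y : Bool) {ε : ℝ} (hε : ε ≤ 1 / 8) :
    IsProbabilityMeasure (hardDistribution C y ε) :=
  isProbabilityMeasure_heavyAtomMixture (hC.product (Finset.singleton_nonempty y))
    (ENNReal.ofReal_le_one.2 (by linarith))

lemma ae_mem_hardDistribution (C : Finset (HalfSphere n hn)) (y : Bool) (ε : ℝ) :
    ∀ᵐ p ∂hardDistribution C y ε,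
      p ∈ insert (pole, y) (↑(C ×ˢ {y}) : Set (HalfSphere n hn × Bool)) :=
  ae_mem_heavyAtomMixture

lemma label_eq_and_inner_nonpos (heq : ∀ x ∈ C, ⟪x.1, e₁ n hn⟫ = 0) {y : Bool}
    {p : HalfSphere n hn × Bool}
    (hp : p ∈ insert (pole, y) (↑(C ×ˢ {y}) : Set (HalfSphere n hn × Bool))) :
    p.2 = y ∧ ⟪p.1.1, e₁ n hn⟫ ≤ 0 := by
  rcases hp with rfl | hp
  · exact ⟨rfl, by rw [inner_pole_e₁]; norm_num⟩
  · rw [Finset.mem_coe, Finset.mem_product, Finset.mem_singleton] at hp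
    exact ⟨hp.2, (heq _ hp.1).le⟩

lemma hardDistribution_graph_capTarget (hC : C.Nonempty) (heq : ∀ x ∈ C, ⟪x.1, e₁ n hn⟫ = 0)
    (y : Bool) {ε : ℝ} (hε : ε ≤ 1 / 8) :
    hardDistribution C y ε {p | p.2 = capTarget y p.1} = 1 := by
  have := isProbabilityMeasure_hardDistribution hC y hε
  have hae : ∀ᵐ p ∂hardDistribution C y ε, p.2 = capTarget y p.1 :=
    (ae_mem_hardDistribution C y ε).mono fun p hp => by
      obtain ⟨hpy, hpe⟩ := label_eq_and_inner_nonpos heq hp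
      rw [capTarget_of_inner_nonpos hpe, hpy]
  exact (measure_congr (Filter.eventuallyEq_univ.2 hae)).trans measure_univ

lemma margin_hardDistribution (heq : ∀ x ∈ C, ⟪x.1, e₁ n hn⟫ = 0) {y : Bool} {ε : ℝ}
    {p : HalfSphere n hn × Bool} (hp : p ∈ msupport (hardDistribution C y ε)) :
    1 / 8 * ‖-labelSign y • e₁ n hn‖ / 2 ≤
      labelSign p.2 * (⟪-labelSign y • e₁ n hn, p.1.1⟫ + labelSign y * (1 / 16)) := by
  have hclosed : IsClosed (insert (pole, y) (↑(C ×ˢ {y}) : Set (HalfSphere n hn × Bool))) :=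
    ((C ×ˢ {y}).finite_toSet.insert _).isClosed
  obtain ⟨hpy, hpe⟩ := label_eq_and_inner_nonpos heq
    (msupport_subset_of_ae_mem hclosed (ae_mem_hardDistribution C y ε) hp)
  have hsign : labelSign y * labelSign y = 1 := by simp [labelSign_mul_labelSign]
  rw [norm_neg_labelSign_smul, norm_e₁, inner_neg_labelSign_smul_add, hpy, ← mul_assoc, hsign,
    real_inner_comm]
  linarith

lemma lt_lintegral_atkDetT_zero (hC : C.Nonempty) {y : Bool} {ε : ℝ} (hε₀ : 0 < ε)
    (hε : ε < 1 / 16) (hA : A 0 pole ≠ y) :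
    ENNReal.ofReal ε < ∫⁻ f, atkDetT 1 (hardDistribution C y ε) (capTarget y) (toTrain f) A
      ∂samples (hardDistribution C y ε) 0 := by
  have := isProbabilityMeasure_hardDistribution hC y (ε := ε) (by linarith)
  have hpole : capTarget y (pole : HalfSphere n hn) = y :=
    capTarget_of_inner_nonpos (by rw [inner_pole_e₁]; norm_num) y
  calc ENNReal.ofReal ε < 1 - ENNReal.ofReal (8 * ε) := by
        rw [← ENNReal.ofReal_one, ← ENNReal.ofReal_sub _ (by linarith)]
        exact (ENNReal.ofReal_lt_ofReal_iff (by linarith)).2 (by linarith)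
    _ ≤ hardDistribution C y ε {(pole, y)} := le_heavyAtomMixture_singleton_self
    _ ≤ _ := by
        have hle := sum_mul_compl_pow_le_lintegral_atkDetT (D := hardDistribution C y ε)
          (h := capTarget y) (A := A) (t := 1) (Adv := 0) (C := {pole}) (m := 0) (by simp)
          (.of_forall fun f => by simpa [toTrain, hpole] using hA)
        rwa [Finset.sum_singleton, hpole, pow_zero, mul_one] at hle

lemma hardDistribution_singleton (heq : ∀ x ∈ C, ⟪x.1, e₁ n hn⟫ = 0) (hx : x ∈ C) (y : Bool)
    (ε : ℝ) : hardDistribution C y ε {(x, y)} = ENNReal.ofReal (8 * ε / C.card) := by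
  have hne : ((pole : HalfSphere n hn), y) ≠ (x, y) := fun h => by
    have hpole := inner_pole_e₁ (n := n) (hn := hn)
    rw [(Prod.mk.inj h).1, heq x hx] at hpole
    norm_num at hpole
  rw [hardDistribution, heavyAtomMixture_singleton (by simpa using hx) hne, Finset.card_product,
    Finset.card_singleton, mul_one, ENNReal.ofReal_div_of_pos, ENNReal.ofReal_natCast]
  exact Nat.cast_pos.2 (Finset.card_pos.2 ⟨x, hx⟩)

lemma ae_attacker_succeeds (hA : IsHardMarginSVM Subtype.val A) (hC : C.Nonempty)
    (heq : ∀ x ∈ C, ⟪x.1, e₁ n hn⟫ = 0)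
    (hpair : (C : Set (HalfSphere n hn)).Pairwise fun x y => ⟪x.1, y.1⟫ ≤ 1 / 2) (y : Bool)
    {ε : ℝ} (hε : ε ≤ 1 / 8) {m : ℕ} (hm : m ≠ 0) :
    ∀ᵐ f ∂samples (hardDistribution C y ε) m, ∀ x ∈ C, (∀ k, f k ≠ (x, capTarget y x)) →
      A (toTrain f + attacker y x) x ≠ capTarget y x := by
  have := isProbabilityMeasure_hardDistribution hC y hε
  refine (ae_samples_of_ae (ae_mem_hardDistribution C y ε) m).mono fun f hf x hx hxf => ?_
  have hS : toTrain f ≠ 0 := by simpa [toTrain] using hm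
  have hmem : ∀ p ∈ toTrain f,
      p ∈ insert (pole, y) (↑(C ×ˢ {y}) : Set (HalfSphere n hn × Bool)) := fun p hp => by
    obtain ⟨k, rfl⟩ := mem_toTrain.1 hp
    exact hf k
  rw [capTarget_of_inner_nonpos (heq x hx).le] at hxf ⊢
  rw [apply_add_attacker hA heq hpair hS hmem hx (by simpa [mem_toTrain] using hxf)]
  exact Bool.not_ne_self y

lemma lt_lintegral_atkDetT (hA : IsHardMarginSVM Subtype.val A) (hC : C.Nonempty)
    (heq : ∀ x ∈ C, ⟪x.1, e₁ n hn⟫ = 0)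
    (hpair : (C : Set (HalfSphere n hn)).Pairwise fun x y => ⟪x.1, y.1⟫ ≤ 1 / 2) (y : Bool)
    {ε : ℝ} (hε₀ : 0 < ε) (hε : ε ≤ 1 / 16) {m : ℕ} (hm₀ : m ≠ 0) (hm : m * (8 * ε) < C.card) :
    ENNReal.ofReal ε < ∫⁻ f, atkDetT 1 (hardDistribution C y ε) (capTarget y) (toTrain f) A
      ∂samples (hardDistribution C y ε) m := by
  have := isProbabilityMeasure_hardDistribution hC y (ε := ε) (by linarith)
  have hlabel (x) (hx : x ∈ C) : capTarget y x = y := capTarget_of_inner_nonpos (heq x hx).le y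
  have hcard : 1 ≤ (C.card : ℝ) := by exact_mod_cast hC.card_pos
  set u : ℝ := 8 * ε / C.card with hu
  have hu₀ : 0 ≤ u := by positivity
  have hu₁ : u ≤ 1 / 2 := (div_le_self (by linarith) hcard).trans (by linarith)
  have hmu : m * u < 1 := by rwa [hu, ← mul_div_assoc, div_lt_one (by linarith)]
  have hterm (x) (hx : x ∈ C) : hardDistribution C y ε {(x, capTarget y x)} *
      hardDistribution C y ε {(x, capTarget y x)}ᶜ ^ m = ENNReal.ofReal (u * (1 - u) ^ m) := by
    rw [prob_compl_eq_one_sub (measurableSet_singleton _), hlabel x hx,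
      hardDistribution_singleton heq hx, ← ENNReal.ofReal_one, ← ENNReal.ofReal_sub _ hu₀,
      ← ENNReal.ofReal_pow (by linarith), ← ENNReal.ofReal_mul hu₀]
  calc ENNReal.ofReal ε < ENNReal.ofReal (C.card * (u * (1 - u) ^ m)) := by
        have hsurvive : 1 / 8 < (1 - u) ^ m := one_eighth_lt_one_sub_pow hu₁ hmu
        have hmass : C.card * u = 8 * ε := mul_div_cancel₀ _ (by linarith)
        rw [← mul_assoc, hmass]
        exact (ENNReal.ofReal_lt_ofReal_iff (by positivity)).2 (by nlinarith)
    _ = ∑ x ∈ C, hardDistribution C y ε {(x, capTarget y x)} *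
          hardDistribution C y ε {(x, capTarget y x)}ᶜ ^ m := by
        rw [Finset.sum_congr rfl hterm, Finset.sum_const, nsmul_eq_mul,
          ENNReal.ofReal_mul (Nat.cast_nonneg _), ENNReal.ofReal_natCast]
    _ ≤ _ := sum_mul_compl_pow_le_lintegral_atkDetT (attacker_clean_and_card_le_one y)
        (ae_attacker_succeeds hA hC heq hpair y (by linarith) hm₀)

end HalfSphere

/-- Any hard-margin SVM needs `max(e^{n/128}/(768ε), 1/(8ε))` samples to get `1`-point
attackable rate `ε` for linear classifiers with margin `1/8`. -/
theorem stmt6 (n : ℕ) (hn : 3 ≤ n)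
    (A : Multiset (HalfSphere n hn × Bool) → HalfSphere n hn → Bool)
    (hSVM : ∀ S : Multiset (HalfSphere n hn × Bool),
      (∃ p ∈ S, p.2 = true) → (∃ p ∈ S, p.2 = false) →
      (∃ (w : EuclideanSpace ℝ (Fin n)) (b : ℝ), w ≠ 0 ∧
        ∀ p ∈ S, p.2 = decide (0 ≤ ⟪w, p.1.1⟫ + b)) →
      ∃ (w : EuclideanSpace ℝ (Fin n)) (b : ℝ), w ≠ 0 ∧
        A S = (fun x => decide (0 ≤ ⟪w, x.1⟫ + b)) ∧
        (∀ p ∈ S, p.2 = decide (0 ≤ ⟪w, p.1.1⟫ + b)) ∧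
        ∀ (w' : EuclideanSpace ℝ (Fin n)) (b' : ℝ), w' ≠ 0 →
          (∀ p ∈ S, p.2 = decide (0 ≤ ⟪w', p.1.1⟫ + b')) →
          (⨅ p : {p // p ∈ S}, |⟪w', p.1.1.1⟫ + b'| / ‖w'‖) ≤
            ⨅ p : {p // p ∈ S}, |⟪w, p.1.1.1⟫ + b| / ‖w‖) :
    ∀ ε : ℝ, 0 < ε → ε < 1 / 16 →
    ∃ (w : EuclideanSpace ℝ (Fin n)) (b : ℝ), w ≠ 0 ∧
    ∃ D : Measure (HalfSphere n hn × Bool), IsProbabilityMeasure D ∧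
      D {p : HalfSphere n hn × Bool | p.2 = decide (0 ≤ ⟪w, p.1.1⟫ + b)} = 1 ∧
      (∀ p ∈ msupport D,
        (1 / 8 : ℝ) * ‖w‖ / 2 ≤ (if p.2 then (1 : ℝ) else -1) * (⟪w, p.1.1⟫ + b)) ∧
      ∀ m : ℕ, (m : ℝ) < max (Real.exp (n / 128) / (768 * ε)) (1 / (8 * ε)) →
        ENNReal.ofReal ε <
          ∫⁻ f, atkDetT 1 D (fun x => decide (0 ≤ ⟪w, x.1⟫ + b)) (toTrain f) A
            ∂(samples D m) := by
  intro ε hε₀ hε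
  have hA : IsHardMarginSVM Subtype.val A := hSVM
  obtain ⟨C, heq, hpair, hone, hexp⟩ := HalfSphere.exists_equatorial_code n hn
  have hC : C.Nonempty := Finset.card_pos.1 (by exact_mod_cast hone)
  obtain ⟨y, hy⟩ : ∃ y, A 0 HalfSphere.pole ≠ y := ⟨!A 0 HalfSphere.pole, by simp⟩
  refine ⟨-labelSign y • e₁ n hn, labelSign y * (1 / 16), ?_, HalfSphere.hardDistribution C y ε,
    HalfSphere.isProbabilityMeasure_hardDistribution hC y (by linarith),
    HalfSphere.hardDistribution_graph_capTarget hC heq y (by linarith),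
    fun p hp => HalfSphere.margin_hardDistribution heq hp, fun m hm => ?_⟩
  · rw [← norm_ne_zero_iff, norm_neg_labelSign_smul, HalfSphere.norm_e₁]
    exact one_ne_zero
  · rcases eq_or_ne m 0 with rfl | hm₀
    · exact HalfSphere.lt_lintegral_atkDetT_zero hC hε₀ hε hy
    · refine HalfSphere.lt_lintegral_atkDetT hA hC heq hpair y hε₀ hε.le hm₀ ?_
      have hscale : Real.exp (n / 128) / (768 * ε) = Real.exp (n / 128) / 96 / (8 * ε) := by
        rw [div_div]
        ring_nf
      rw [hscale] at hm
      exact (lt_div_iff₀ (by positivity)).1 (hm.trans_le (max_le (by gcongr) (by gcongr)))
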